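/- arXiv:1507.00438 — 2 statements merged into one kernel-verified Lean document; each statement's English description precedes it below -/
import Mathlib

section
/- (Vanishing of search directions along the algorithm.) Let f₁, f₂ : ℝ^d → ℝ be continuously differentiable convex functions and h₁, h₂ : ℝ^d → ℝ convex, with F = f₁ − f₂ + h₁ − h₂ bounded below on ℝ^d. Let m > 0, α ∈ (0, 1), t̲ ∈ (0, 1], and suppose given sequences: points x_k ∈ ℝ^d; symmetric positive definite linear maps H_k with ⟨H_k u, u⟩ ≥ m‖u‖² for all u; subgradients z_{h₂,k} ∈ ∂h₂(x_k); search directions Δx_k minimizing d ↦ ⟨v_k, d⟩ + ½⟨H_k d, d⟩ + h₁(x_k + d) where v_k = ∇f₁(x_k) − ∇f₂(x_k) − z_{h₂,k}; step sizes t_k ∈ [t̲, 1] with x_{k+1} = x_k + t_k Δx_k; and assume the sufficient descent condition F(x_{k+1}) − F(x_k) ≤ α·t_k·(⟨v_k, Δx_k⟩ + h₁(x_k + Δx_k) − h₁(x_k)) for all k. Then the sequence F(x_k) is nonincreasing and converges, ⟨H_k Δx_k, Δx_k⟩ → 0, and Δx_k → 0. -/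
open RealInnerProductSpace Filter

/-!
The zero direction costs `h₁ (x k)` in the subproblem, so a minimizer `Δx k` has predicted change at
most `-½⟪H k (Δx k), Δx k⟫`. Sufficient descent turns this into a drop of `F` by at least a fixed
positive multiple of `⟪H k (Δx k), Δx k⟫`. Since `F (x k)` decreases and is bounded below, it
converges, its successive drops vanish, and the curvature terms `⟪H k (Δx k), Δx k⟫` vanish with
them; these dominate `m * ‖Δx k‖ ^ 2`.
-/

lemma antitone_of_mul_le_sub_succ {φ q : ℕ → ℝ} {c : ℝ} (hc : 0 ≤ c) (hq : ∀ k, 0 ≤ q k)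
    (hdrop : ∀ k, c * q k ≤ φ k - φ (k + 1)) : Antitone φ :=
  antitone_nat_of_succ_le fun k ↦ sub_nonneg.1 ((mul_nonneg hc (hq k)).trans (hdrop k))

lemma tendsto_sub_succ_zero {G : Type*} [TopologicalSpace G] [AddGroup G] [ContinuousSub G]
    {φ : ℕ → G} {a : G} (hφ : Tendsto φ atTop (nhds a)) :
    Tendsto (fun k ↦ φ k - φ (k + 1)) atTop (nhds 0) := by
  simpa only [sub_self, Function.comp_def] using hφ.sub (hφ.comp (tendsto_add_atTop_nat 1))

lemma tendsto_zero_of_mul_le {ι : Type*} {l : Filter ι} {q r : ι → ℝ} {c : ℝ} (hc : 0 < c)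
    (hq : ∀ i, 0 ≤ q i) (hle : ∀ i, c * q i ≤ r i) (hr : Tendsto r l (nhds 0)) :
    Tendsto q l (nhds 0) := by
  have hquot : Tendsto (fun i ↦ r i / c) l (nhds 0) := by
    simpa only [zero_div] using hr.div_const c
  exact squeeze_zero hq (fun i ↦ (le_div_iff₀' hc).2 (hle i)) hquot

lemma tendsto_zero_of_mul_norm_sq_le {ι E : Type*} [SeminormedAddCommGroup E] {l : Filter ι}
    {u : ι → E} {r : ι → ℝ} {m : ℝ} (hm : 0 < m) (hle : ∀ i, m * ‖u i‖ ^ 2 ≤ r i)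
    (hr : Tendsto r l (nhds 0)) : Tendsto u l (nhds 0) := by
  have hsq : Tendsto (fun i ↦ ‖u i‖ ^ 2) l (nhds 0) :=
    tendsto_zero_of_mul_le hm (fun _ ↦ sq_nonneg _) hle hr
  have hnorm : Tendsto (fun i ↦ ‖u i‖) l (nhds 0) := by
    simpa only [Real.sqrt_sq (norm_nonneg _), Real.sqrt_zero] using hsq.sqrt
  exact tendsto_zero_iff_norm_tendsto_zero.2 hnorm

section Subproblem

variable {E : Type*} [SeminormedAddCommGroup E] [InnerProductSpace ℝ E]

/-- The objective of the search-direction subproblem at `x`: the slope `v` models the part of the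
objective that is linearized, `H` supplies the curvature, and `h` is kept exactly. The metric `H` is
encoded as a bare map, so that variable or nonlinear metrics are covered. -/
noncomputable def subproblemObjective (v : E) (H : E → E) (h : E → ℝ) (x u : E) : ℝ :=
  ⟪v, u⟫ + (1 / 2) * ⟪H u, u⟫ + h (x + u)

/-- The first-order predicted change of the objective along a full step `u` from `x`, against which
sufficient descent is measured; it omits the curvature term of `subproblemObjective`. -/
def predictedChange (v : E) (h : E → ℝ) (x u : E) : ℝ :=
  ⟪v, u⟫ + h (x + u) - h x

variable {v : E} {H : E → E} {h : E → ℝ} {x u : E}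

lemma subproblemObjective_zero : subproblemObjective v H h x 0 = h x := by
  simp [subproblemObjective]

lemma predictedChange_le_neg_half_inner
    (hu : subproblemObjective v H h x u ≤ subproblemObjective v H h x 0) :
    predictedChange v h x u ≤ -(1 / 2 * ⟪H u, u⟫) := by
  rw [subproblemObjective_zero, subproblemObjective] at hu
  rw [predictedChange]
  linarith

lemma mul_inner_le_sub_of_sufficient_descent {a b c ρ : ℝ} (hc : 0 ≤ c) (hcρ : c ≤ ρ)
    (hcurv : 0 ≤ ⟪H u, u⟫)
    (hu : subproblemObjective v H h x u ≤ subproblemObjective v H h x 0)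
    (hdesc : b - a ≤ ρ * predictedChange v h x u) :
    c / 2 * ⟪H u, u⟫ ≤ a - b := by
  have hrate : c * (1 / 2 * ⟪H u, u⟫) ≤ ρ * (1 / 2 * ⟪H u, u⟫) :=
    mul_le_mul_of_nonneg_right hcρ (by positivity)
  have hpred : ρ * predictedChange v h x u ≤ ρ * -(1 / 2 * ⟪H u, u⟫) :=
    mul_le_mul_of_nonneg_left (predictedChange_le_neg_half_inner hu) (hc.trans hcρ)
  linarith

end Subproblem

theorem stmt_10_general {E : Type*} [SeminormedAddCommGroup E] [InnerProductSpace ℝ E]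
    {F h : E → ℝ} {x v Δx : ℕ → E} {H : ℕ → E → E} {ρ : ℕ → ℝ} {c m : ℝ}
    (hbdd : BddBelow (Set.range fun k ↦ F (x k))) (hc : 0 < c) (hρ : ∀ k, c ≤ ρ k) (hm : 0 < m)
    (hcoercive : ∀ k, m * ‖Δx k‖ ^ 2 ≤ ⟪H k (Δx k), Δx k⟫)
    (hsub : ∀ k, subproblemObjective (v k) (H k) h (x k) (Δx k)
      ≤ subproblemObjective (v k) (H k) h (x k) 0)
    (hdesc : ∀ k, F (x (k + 1)) - F (x k) ≤ ρ k * predictedChange (v k) h (x k) (Δx k)) :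
    Antitone (fun k ↦ F (x k)) ∧
    (∃ ξ : ℝ, Tendsto (fun k ↦ F (x k)) atTop (nhds ξ)) ∧
    Tendsto (fun k ↦ ⟪H k (Δx k), Δx k⟫) atTop (nhds 0) ∧
    Tendsto Δx atTop (nhds 0) := by
  have hcurv (k : ℕ) : 0 ≤ ⟪H k (Δx k), Δx k⟫ := le_trans (by positivity) (hcoercive k)
  have hdrop (k : ℕ) : c / 2 * ⟪H k (Δx k), Δx k⟫ ≤ F (x k) - F (x (k + 1)) :=
    mul_inner_le_sub_of_sufficient_descent hc.le (hρ k) (hcurv k) (hsub k) (hdesc k)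
  have hanti : Antitone (fun k ↦ F (x k)) :=
    antitone_of_mul_le_sub_succ (half_pos hc).le hcurv hdrop
  have hconv : Tendsto (fun k ↦ F (x k)) atTop (nhds (⨅ k, F (x k))) :=
    tendsto_atTop_ciInf hanti hbdd
  have hcurv_zero : Tendsto (fun k ↦ ⟪H k (Δx k), Δx k⟫) atTop (nhds 0) :=
    tendsto_zero_of_mul_le (half_pos hc) hcurv hdrop (tendsto_sub_succ_zero hconv)
  exact ⟨hanti, ⟨_, hconv⟩, hcurv_zero, tendsto_zero_of_mul_norm_sq_le hm hcoercive hcurv_zero⟩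

theorem stmt_10 (d : ℕ) (hd : 1 ≤ d)
    (f₁ f₂ h₁ h₂ : EuclideanSpace ℝ (Fin d) → ℝ)
    (hf₁ : ContDiff ℝ 1 f₁) (hf₂ : ContDiff ℝ 1 f₂)
    (hf₁c : ConvexOn ℝ Set.univ f₁) (hf₂c : ConvexOn ℝ Set.univ f₂)
    (hh₁ : ConvexOn ℝ Set.univ h₁) (hh₂ : ConvexOn ℝ Set.univ h₂)
    (F : EuclideanSpace ℝ (Fin d) → ℝ)
    (hF : ∀ x, F x = f₁ x - f₂ x + h₁ x - h₂ x)
    (hbdd : ∃ B : ℝ, ∀ x, B ≤ F x)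
    (m : ℝ) (hm : 0 < m) (α : ℝ) (hα : α ∈ Set.Ioo (0:ℝ) 1)
    (tlow : ℝ) (htlow : tlow ∈ Set.Ioc (0:ℝ) 1)
    (x : ℕ → EuclideanSpace ℝ (Fin d))
    (H : ℕ → (EuclideanSpace ℝ (Fin d) →ₗ[ℝ] EuclideanSpace ℝ (Fin d)))
    (hsym : ∀ k, ∀ u w : EuclideanSpace ℝ (Fin d), ⟪H k u, w⟫ = ⟪u, H k w⟫)
    (hpd : ∀ k, ∀ u : EuclideanSpace ℝ (Fin d), u ≠ 0 → 0 < ⟪H k u, u⟫)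
    (hHm : ∀ k, ∀ u : EuclideanSpace ℝ (Fin d), ⟪H k u, u⟫ ≥ m * ‖u‖ ^ 2)
    (zh₂ : ℕ → EuclideanSpace ℝ (Fin d))
    (hzh₂ : ∀ k, ∀ y, h₂ y ≥ h₂ (x k) + ⟪zh₂ k, y - x k⟫)
    (v : ℕ → EuclideanSpace ℝ (Fin d))
    (hv : ∀ k, v k = gradient f₁ (x k) - gradient f₂ (x k) - zh₂ k)
    (Δx : ℕ → EuclideanSpace ℝ (Fin d))
    (hmin : ∀ k, ∀ dd : EuclideanSpace ℝ (Fin d),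
      ⟪v k, Δx k⟫ + (1/2) * ⟪H k (Δx k), Δx k⟫ + h₁ (x k + Δx k)
        ≤ ⟪v k, dd⟫ + (1/2) * ⟪H k dd, dd⟫ + h₁ (x k + dd))
    (t : ℕ → ℝ) (ht : ∀ k, t k ∈ Set.Icc tlow 1)
    (hstep : ∀ k, x (k + 1) = x k + t k • Δx k)
    (hdesc : ∀ k, F (x (k + 1)) - F (x k)
      ≤ α * t k * (⟪v k, Δx k⟫ + h₁ (x k + Δx k) - h₁ (x k))) :
    Antitone (fun k => F (x k)) ∧
    (∃ ξ : ℝ, Tendsto (fun k => F (x k)) atTop (nhds ξ)) ∧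
    Tendsto (fun k => ⟪H k (Δx k), Δx k⟫) atTop (nhds 0) ∧
    Tendsto Δx atTop (nhds 0) := by
  obtain ⟨B, hB⟩ := hbdd
  exact stmt_10_general (ρ := fun k ↦ α * t k) ⟨B, Set.forall_mem_range.2 fun k ↦ hB (x k)⟩
    (mul_pos hα.1 htlow.1) (fun k ↦ mul_le_mul_of_nonneg_left (ht k).1 hα.1.le) hm
    (fun k ↦ hHm k (Δx k)) (fun k ↦ hmin k 0) hdesc
end

section
/- (Proposition 1: limit points are stationary.) Let f₁, f₂ : ℝ^d → ℝ be continuously differentiable convex functions and h₁, h₂ : ℝ^d → ℝ convex, with F = f₁ − f₂ + h₁ − h₂ bounded below on ℝ^d. Let 0 < m ≤ M, α ∈ (0, 1), t̲ ∈ (0, 1], and suppose given sequences: points x_k ∈ ℝ^d; symmetric linear maps H_k with m‖u‖² ≤ ⟨H_k u, u⟩ and ‖H_k u‖ ≤ M‖u‖ for all u; subgradients z_{h₂,k} ∈ ∂h₂(x_k); search directions Δx_k minimizing d ↦ ⟨v_k, d⟩ + ½⟨H_k d, d⟩ + h₁(x_k + d) where v_k = ∇f₁(x_k) − ∇f₂(x_k)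 − z_{h₂,k}; step sizes t_k ∈ [t̲, 1] with x_{k+1} = x_k + t_k Δx_k; and assume F(x_{k+1}) − F(x_k) ≤ α·t_k·(⟨v_k, Δx_k⟩ + h₁(x_k + Δx_k) − h₁(x_k)) for all k. Then every limit point x⋆ of the sequence (x_k) is a stationary point of F, i.e., there exist z₁ ∈ ∂h₁(x⋆) and z₂ ∈ ∂h₂(x⋆) with ∇f₁(x⋆) − ∇f₂(x⋆) + z₁ − z₂ = 0. -/
open RealInnerProductSpace Filter

/-!
The sufficient decrease condition, together with `m ‖Δxₖ‖² ≤ ⟪Hₖ Δxₖ, Δxₖ⟫`, makes `F xₖ` decrease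
by at least a multiple of `‖Δxₖ‖²`. At a limit point `x⋆` the values `F xₖ` accumulate at `F x⋆`,
so the monotone sequence `F xₖ` converges and `Δxₖ → 0`. Subgradients of a continuous function
remain bounded near `x⋆`, so the chosen ones have a weak limit `z₂ ∈ ∂h₂(x⋆)`. The first-order
optimality condition of the `k`-th subproblem is a variational inequality in which the contribution
of `Hₖ` is at most `M ‖Δxₖ‖ ‖y - xₖ - Δxₖ‖`; in the limit it says that
`z₂ - ∇f₁(x⋆) + ∇f₂(x⋆)` is a subgradient of `h₁` at `x⋆`.
-/

open Set
open scoped Topology Gradient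

variable {ι E : Type*} [NormedAddCommGroup E] [InnerProductSpace ℝ E]

/-- The subdifferential `∂h(x)`: the set of all subgradients of `h` at `x`, identified with vectors
through the inner product. -/
def subdifferential (h : E → ℝ) (x : E) : Set E :=
  {z | ∀ y, h x + ⟪z, y - x⟫ ≤ h y}

/-- The objective of the proximal Newton subproblem at `x`, as a function of the search direction:
the smooth part is replaced by a quadratic model with slope `v` and Hessian approximation `H`,
while `h` is kept exact. -/
noncomputable def proxNewtonModel (h : E → ℝ) (x v : E) (H : E →ₗ[ℝ] E) (w : E) : ℝ :=
  ⟪v, w⟫ + 1 / 2 * ⟪H w, w⟫ + h (x + w)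

section WeakLimits

theorem exists_weak_limit_of_eventually_norm_le [CompleteSpace E] {U : Ultrafilter ι} {z : ι → E}
    {C : ℝ} (hz : ∀ᶠ k in U, ‖z k‖ ≤ C) :
    ∃ z₀, ∀ y, Tendsto (fun k ↦ ⟪z k, y⟫) U (𝓝 ⟪z₀, y⟫) := by
  let dual (k : ι) : WeakDual ℝ E := StrongDual.toWeakDual (InnerProductSpace.toDual ℝ E (z k))
  obtain ⟨ℓ, -, hℓ⟩ := (WeakDual.isCompact_closedBall (𝕜 := ℝ) (E := E) 0 C).ultrafilter_le_nhds'
    (U.map dual) (hz.mono fun k hk ↦ by simpa [dual] using hk)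
  refine ⟨(InnerProductSpace.toDual ℝ E).symm (WeakDual.toStrongDual ℓ), fun y ↦ ?_⟩
  rw [InnerProductSpace.toDual_symm_apply]
  exact ((WeakDual.eval_continuous y).tendsto ℓ).comp hℓ

theorem tendsto_inner_of_weak_of_strong {l : Filter ι} {z w : ι → E} {z₀ w₀ : E} {C : ℝ}
    (hzC : ∀ᶠ k in l, ‖z k‖ ≤ C) (hz : ∀ y, Tendsto (fun k ↦ ⟪z k, y⟫) l (𝓝 ⟪z₀, y⟫))
    (hw : Tendsto w l (𝓝 w₀)) : Tendsto (fun k ↦ ⟪z k, w k⟫) l (𝓝 ⟪z₀, w₀⟫) := by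
  have hbound : Tendsto (fun k ↦ C * ‖w k - w₀‖) l (𝓝 0) := by
    simpa using (tendsto_iff_norm_sub_tendsto_zero.1 hw).const_mul C
  have hrest : Tendsto (fun k ↦ ⟪z k, w k - w₀⟫) l (𝓝 0) :=
    squeeze_zero_norm' (hzC.mono fun k hk ↦ (norm_inner_le_norm _ _).trans (by gcongr)) hbound
  simpa [inner_sub_right] using (hz w₀).add hrest

end WeakLimits

section Subdifferential

variable {h : E → ℝ}

theorem mul_norm_le_of_mem_subdifferential {x z : E} (hz : z ∈ subdifferential h x) {r B : ℝ}
    (hr : 0 ≤ r) (hB : ∀ y ∈ Metric.closedBall x r, h y ≤ B) : r * ‖z‖ ≤ B - h x := by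
  rcases eq_or_ne z 0 with rfl | hz0
  · simpa using hB x (Metric.mem_closedBall_self hr)
  have hnorm : ‖z‖ ≠ 0 := norm_ne_zero_iff.2 hz0
  have hball : x + (r / ‖z‖) • z ∈ Metric.closedBall x r := by
    simp [norm_smul, abs_of_nonneg hr, hnorm]
  have hsub := hz (x + (r / ‖z‖) • z)
  have hinner : ⟪z, x + (r / ‖z‖) • z - x⟫ = r * ‖z‖ := by
    rw [add_sub_cancel_left, real_inner_smul_right, real_inner_self_eq_norm_sq]
    field_simp
  linarith [hB _ hball]

theorem exists_eventually_norm_le_of_mem_subdifferential {p : E}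
    (hh : ContinuousAt h p) :
    ∃ C, ∀ᶠ x in 𝓝 p, ∀ z ∈ subdifferential h x, ‖z‖ ≤ C := by
  obtain ⟨r, hr, hclose⟩ := Metric.continuousAt_iff.1 hh 1 one_pos
  refine ⟨2 / (r / 2), ?_⟩
  filter_upwards [Metric.ball_mem_nhds p (half_pos hr)] with x hx z hz
  have hx' : dist x p < r / 2 := hx
  have hupper : ∀ y ∈ Metric.closedBall x (r / 2), h y ≤ h p + 1 := fun y hy ↦ by
    have hyp : dist y p < r := by
      linarith [dist_triangle y x p, Metric.mem_closedBall.1 hy]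
    linarith [(abs_lt.1 (hclose hyp)).2]
  have hlower : h p - 1 ≤ h x := by
    linarith [(abs_lt.1 (hclose (hx'.trans (half_lt_self hr)))).1]
  rw [le_div_iff₀' (half_pos hr)]
  linarith [mul_norm_le_of_mem_subdifferential hz (half_pos hr).le hupper]

-- Testing against strongly convergent `w` combines weak convergence of `z` with its boundedness.
theorem exists_weak_limit_mem_subdifferential [CompleteSpace E] {U : Ultrafilter ι} {x z : ι → E}
    {p : E} (hh : ContinuousAt h p) (hx : Tendsto x U (𝓝 p))
    (hz : ∀ k, z k ∈ subdifferential h (x k)) :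
    ∃ z₀ ∈ subdifferential h p, ∀ (w : ι → E) (w₀ : E), Tendsto w U (𝓝 w₀) →
      Tendsto (fun k ↦ ⟪z k, w k⟫) U (𝓝 ⟪z₀, w₀⟫) := by
  obtain ⟨C, hC⟩ := exists_eventually_norm_le_of_mem_subdifferential hh
  have hzC : ∀ᶠ k in U, ‖z k‖ ≤ C := (hx.eventually hC).mono fun k hk ↦ hk _ (hz k)
  obtain ⟨z₀, hz₀⟩ := exists_weak_limit_of_eventually_norm_le hzC
  have hinner (w : ι → E) (w₀ : E) (hw : Tendsto w U (𝓝 w₀)) :=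
    tendsto_inner_of_weak_of_strong hzC hz₀ hw
  refine ⟨z₀, fun y ↦ ?_, hinner⟩
  exact le_of_tendsto ((hh.tendsto.comp hx).add (hinner _ _ (tendsto_const_nhds.sub hx)))
    (.of_forall fun k ↦ hz k y)

end Subdifferential

section Subproblem

theorem le_add_lineDeriv_of_forall_add_le_add {V : Type*} [AddCommGroup V] [Module ℝ V]
    {φ h : V → ℝ} {φ' : ℝ} {p y : V} (hh : ConvexOn ℝ univ h) (hφ : HasLineDerivAt ℝ φ φ' p (y - p))
    (hmin : ∀ w, φ p + h p ≤ φ w + h w) : h p ≤ h y + φ' := by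
  suffices h p - h y ≤ φ' by linarith
  refine ge_of_tendsto hφ.tendsto_slope_zero_right ?_
  filter_upwards [Ioc_mem_nhdsGT (zero_lt_one' ℝ)] with s ⟨hs0, hs1⟩
  have hconv : h (p + s • (y - p)) ≤ (1 - s) * h p + s * h y := by
    have := hh.2 (mem_univ p) (mem_univ y) (sub_nonneg.2 hs1) hs0.le (sub_add_cancel 1 s)
    rwa [show (1 - s) • p + s • y = p + s • (y - p) by module] at this
  rw [smul_eq_mul, le_inv_mul_iff₀ hs0]
  linarith [hmin (p + s • (y - p))]

theorem hasLineDerivAt_inner_add_half_inner (v D u : E) (H : E →ₗ[ℝ] E) :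
    HasLineDerivAt ℝ (fun w ↦ ⟪v, w⟫ + 1 / 2 * ⟪H w, w⟫) (⟪v, u⟫ + 1 / 2 * (⟪H D, u⟫ + ⟪H u, D⟫))
      D u := by
  have hexpand (s : ℝ) : ⟪v, D + s • u⟫ + 1 / 2 * ⟪H (D + s • u), D + s • u⟫ =
      ⟪v, D⟫ + 1 / 2 * ⟪H D, D⟫ + s * (⟪v, u⟫ + 1 / 2 * (⟪H D, u⟫ + ⟪H u, D⟫)) +
        s ^ 2 * (1 / 2 * ⟪H u, u⟫) := by
    simp only [map_add, map_smul, inner_add_left, inner_add_right, real_inner_smul_left,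
      real_inner_smul_right]
    ring
  simp only [HasLineDerivAt, hexpand]
  exact ((((hasDerivAt_id' (0 : ℝ)).mul_const _).const_add _).fun_add
    (((hasDerivAt_id' (0 : ℝ)).fun_pow 2).mul_const _)).congr_deriv (by simp)

variable {h : E → ℝ} {x v D : E} {H : E →ₗ[ℝ] E}

theorem le_add_inner_of_forall_proxNewtonModel_le (hh : ConvexOn ℝ univ h)
    (hmin : ∀ w, proxNewtonModel h x v H D ≤ proxNewtonModel h x v H w) (y : E) :
    h (x + D) ≤ h y + (⟪v, y - (x + D)⟫ +
      1 / 2 * (⟪H D, y - (x + D)⟫ + ⟪H (y - (x + D)), D⟫)) := by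
  have hline := hasLineDerivAt_inner_add_half_inner v D (y - x - D) H
  have := le_add_lineDeriv_of_forall_add_le_add (by simpa using hh.translate_right x) hline hmin
  simpa [sub_sub] using this

theorem inner_add_sub_le_neg_inner_of_forall_proxNewtonModel_le (hh : ConvexOn ℝ univ h)
    (hmin : ∀ w, proxNewtonModel h x v H D ≤ proxNewtonModel h x v H w) :
    ⟪v, D⟫ + h (x + D) - h x ≤ -⟪H D, D⟫ := by
  have := le_add_inner_of_forall_proxNewtonModel_le hh hmin x
  simp only [sub_add_cancel_left, map_neg, inner_neg_left, inner_neg_right] at this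
  linarith

end Subproblem

section Descent

theorem tendsto_atTop_of_antitone_of_mapClusterPt {u : ℕ → ℝ} {a : ℝ} (hu : Antitone u)
    (ha : MapClusterPt a atTop u) : Tendsto u atTop (𝓝 a) := by
  obtain ⟨φ, hφ, hlim⟩ := ha.tendsto_subseq
  exact (tendsto_iff_tendsto_subseq_of_antitone hu hφ.tendsto_atTop).2 hlim

theorem tendsto_zero_of_mul_norm_sq_le_sub_succ {V : Type*} [SeminormedAddCommGroup V]
    {D : ℕ → V} {u : ℕ → ℝ} {a c : ℝ} (hc : 0 < c) (hdec : ∀ k, c * ‖D k‖ ^ 2 ≤ u k - u (k + 1))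
    (ha : MapClusterPt a atTop u) : Tendsto D atTop (𝓝 0) := by
  have hanti : Antitone u := antitone_nat_of_succ_le fun k ↦
    sub_nonneg.1 ((by positivity : 0 ≤ c * ‖D k‖ ^ 2).trans (hdec k))
  have hlim := tendsto_atTop_of_antitone_of_mapClusterPt hanti ha
  have hdiff : Tendsto (fun k ↦ u k - u (k + 1)) atTop (𝓝 0) := by
    simpa using hlim.sub (hlim.comp (tendsto_add_atTop_nat 1))
  have hsq : Tendsto (fun k ↦ c * ‖D k‖ ^ 2) atTop (𝓝 0) :=
    squeeze_zero (fun k ↦ by positivity) hdec hdiff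
  rw [tendsto_zero_iff_norm_tendsto_zero]
  simpa [hc.ne'] using (hsq.const_mul c⁻¹).sqrt

end Descent

section Gradient

variable [CompleteSpace E]

theorem continuous_gradient {f : E → ℝ} (hf : ContDiff ℝ 1 f) : Continuous (∇ f) :=
  (InnerProductSpace.toDual ℝ E).symm.continuous.comp (hf.continuous_fderiv one_ne_zero)

theorem gradient_sub {f g : E → ℝ} {x : E} (hf : DifferentiableAt ℝ f x)
    (hg : DifferentiableAt ℝ g x) : ∇ (f - g) x = ∇ f x - ∇ g x := by
  simp only [gradient, fderiv_sub hf hg, map_sub]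

end Gradient

section Stationarity

theorem tendsto_half_inner_add_inner_zero {l : Filter ι} {H : ι → E →ₗ[ℝ] E} {M : ℝ}
    (hHM : ∀ k u, ‖H k u‖ ≤ M * ‖u‖) {D w : ι → E} {w₀ : E} (hD : Tendsto D l (𝓝 0))
    (hw : Tendsto w l (𝓝 w₀)) :
    Tendsto (fun k ↦ 1 / 2 * (⟪H k (D k), w k⟫ + ⟪H k (w k), D k⟫)) l (𝓝 0) := by
  have hinner (k : ι) (a b : E) : |⟪H k a, b⟫| ≤ M * ‖a‖ * ‖b‖ :=
    (abs_real_inner_le_norm _ _).trans (by gcongr; exact hHM k a)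
  refine squeeze_zero_norm (a := fun k ↦ M * ‖D k‖ * ‖w k‖) (fun k ↦ ?_) ?_
  · rw [Real.norm_eq_abs, abs_mul, abs_of_pos one_half_pos]
    linarith [abs_add_le ⟪H k (D k), w k⟫ ⟪H k (w k), D k⟫, hinner k (D k) (w k),
      hinner k (w k) (D k)]
  · simpa using (hD.norm.const_mul M).mul hw.norm

theorem sub_mem_subdifferential_of_tendsto {l : Filter ι} [l.NeBot] {h : E → ℝ}
    (hh : ConvexOn ℝ univ h) {p g₀ z₀ : E} (hcont : ContinuousAt h p) {x D g z : ι → E}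
    {H : ι → E →ₗ[ℝ] E} {M : ℝ} (hHM : ∀ k u, ‖H k u‖ ≤ M * ‖u‖)
    (hmin : ∀ k w, proxNewtonModel h (x k) (g k - z k) (H k) (D k) ≤
      proxNewtonModel h (x k) (g k - z k) (H k) w)
    (hx : Tendsto x l (𝓝 p)) (hD : Tendsto D l (𝓝 0)) (hg : Tendsto g l (𝓝 g₀))
    (hz : ∀ (w : ι → E) (w₀ : E), Tendsto w l (𝓝 w₀) →
      Tendsto (fun k ↦ ⟪z k, w k⟫) l (𝓝 ⟪z₀, w₀⟫)) :
    z₀ - g₀ ∈ subdifferential h p := fun y ↦ by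
  have htrial : Tendsto (fun k ↦ x k + D k) l (𝓝 p) := by simpa using hx.add hD
  have hdiff : Tendsto (fun k ↦ y - (x k + D k)) l (𝓝 (y - p)) := tendsto_const_nhds.sub htrial
  have hlinear : Tendsto (fun k ↦ ⟪g k - z k, y - (x k + D k)⟫) l (𝓝 ⟪g₀ - z₀, y - p⟫) := by
    simpa only [inner_sub_left] using (hg.inner hdiff).sub (hz _ _ hdiff)
  have hquad := tendsto_half_inner_add_inner_zero hHM hD hdiff
  have hlim : h p ≤ h y + (⟪g₀ - z₀, y - p⟫ + 0) :=
    le_of_tendsto_of_tendsto' (hcont.tendsto.comp htrial) ((hlinear.add hquad).const_add (h y))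
      fun k ↦ le_add_inner_of_forall_proxNewtonModel_le hh (hmin k) y
  rw [← neg_sub g₀ z₀, inner_neg_left]
  linarith

variable {m c₀ : ℝ} {F h₁ : E → ℝ} {x v Δx : ℕ → E} {H : ℕ → E →ₗ[ℝ] E} {c : ℕ → ℝ} {xstar : E}

theorem tendsto_direction_zero_of_mapClusterPt (hh₁ : ConvexOn ℝ univ h₁)
    (hF : ContinuousAt F xstar) (hm : 0 < m) (hHm : ∀ k u, m * ‖u‖ ^ 2 ≤ ⟪H k u, u⟫)
    (hmin : ∀ k w, proxNewtonModel h₁ (x k) (v k) (H k) (Δx k) ≤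
      proxNewtonModel h₁ (x k) (v k) (H k) w)
    (hc₀ : 0 < c₀) (hc : ∀ k, c₀ ≤ c k)
    (hdesc : ∀ k, F (x (k + 1)) - F (x k) ≤
      c k * (⟪v k, Δx k⟫ + h₁ (x k + Δx k) - h₁ (x k)))
    (hxstar : MapClusterPt xstar atTop x) : Tendsto Δx atTop (𝓝 0) := by
  refine tendsto_zero_of_mul_norm_sq_le_sub_succ (mul_pos hc₀ hm) (fun k ↦ ?_)
    (hxstar.continuousAt_comp hF)
  have hmodel : m * ‖Δx k‖ ^ 2 ≤ -(⟪v k, Δx k⟫ + h₁ (x k + Δx k) - h₁ (x k)) := by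
    linarith [hHm k (Δx k), inner_add_sub_le_neg_inner_of_forall_proxNewtonModel_le hh₁ (hmin k)]
  have hck : 0 ≤ c k := hc₀.le.trans (hc k)
  calc c₀ * m * ‖Δx k‖ ^ 2 = c₀ * (m * ‖Δx k‖ ^ 2) := mul_assoc _ _ _
    _ ≤ c k * -(⟪v k, Δx k⟫ + h₁ (x k + Δx k) - h₁ (x k)) := by
      gcongr
      exact hc k
    _ ≤ F (x k) - F (x (k + 1)) := by linarith [hdesc k]

theorem stmt_11_general [CompleteSpace E] {f h₂ : E → ℝ} {M : ℝ} {z : ℕ → E}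
    (hf : ContDiff ℝ 1 f) (hh₁ : ConvexOn ℝ univ h₁) (hcont₁ : Continuous h₁)
    (hcont₂ : Continuous h₂) (hF : ∀ y, F y = f y + h₁ y - h₂ y)
    (hm : 0 < m) (hHm : ∀ k u, m * ‖u‖ ^ 2 ≤ ⟪H k u, u⟫) (hHM : ∀ k u, ‖H k u‖ ≤ M * ‖u‖)
    (hz : ∀ k, z k ∈ subdifferential h₂ (x k)) (hv : ∀ k, v k = ∇ f (x k) - z k)
    (hmin : ∀ k w, proxNewtonModel h₁ (x k) (v k) (H k) (Δx k) ≤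
      proxNewtonModel h₁ (x k) (v k) (H k) w)
    (hc₀ : 0 < c₀) (hc : ∀ k, c₀ ≤ c k)
    (hdesc : ∀ k, F (x (k + 1)) - F (x k) ≤
      c k * (⟪v k, Δx k⟫ + h₁ (x k + Δx k) - h₁ (x k)))
    (hxstar : MapClusterPt xstar atTop x) :
    ∃ z₁ z₂, z₁ ∈ subdifferential h₁ xstar ∧ z₂ ∈ subdifferential h₂ xstar ∧
      ∇ f xstar + z₁ - z₂ = 0 := by
  have hFcont : Continuous F := by
    rw [funext hF]
    exact (hf.continuous.add hcont₁).sub hcont₂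
  have hΔx : Tendsto Δx atTop (𝓝 0) := tendsto_direction_zero_of_mapClusterPt hh₁
    hFcont.continuousAt hm hHm hmin hc₀ hc hdesc hxstar
  obtain ⟨U, hU, hx⟩ := mapClusterPt_iff_ultrafilter.1 hxstar
  obtain ⟨z₂, hz₂, hweak⟩ := exists_weak_limit_mem_subdifferential hcont₂.continuousAt hx hz
  have hgrad : Tendsto (fun k ↦ ∇ f (x k)) U (𝓝 (∇ f xstar)) :=
    ((continuous_gradient hf).tendsto xstar).comp hx
  simp only [hv] at hmin
  have hz₁ : z₂ - ∇ f xstar ∈ subdifferential h₁ xstar := sub_mem_subdifferential_of_tendsto hh₁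
    hcont₁.continuousAt hHM hmin hx (hΔx.mono_left hU) hgrad hweak
  exact ⟨_, z₂, hz₁, hz₂, by abel⟩

end Stationarity

theorem stmt_11 (d : ℕ) (hd : 1 ≤ d)
    (f₁ f₂ h₁ h₂ : EuclideanSpace ℝ (Fin d) → ℝ)
    (hf₁ : ContDiff ℝ 1 f₁) (hf₂ : ContDiff ℝ 1 f₂)
    (hf₁c : ConvexOn ℝ Set.univ f₁) (hf₂c : ConvexOn ℝ Set.univ f₂)
    (hh₁ : ConvexOn ℝ Set.univ h₁) (hh₂ : ConvexOn ℝ Set.univ h₂)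
    (F : EuclideanSpace ℝ (Fin d) → ℝ)
    (hF : ∀ x, F x = f₁ x - f₂ x + h₁ x - h₂ x)
    (hbdd : ∃ B : ℝ, ∀ x, B ≤ F x)
    (m M : ℝ) (hm : 0 < m) (hmM : m ≤ M)
    (α : ℝ) (hα : α ∈ Set.Ioo (0:ℝ) 1)
    (tlow : ℝ) (htlow : tlow ∈ Set.Ioc (0:ℝ) 1)
    (x : ℕ → EuclideanSpace ℝ (Fin d))
    (H : ℕ → (EuclideanSpace ℝ (Fin d) →ₗ[ℝ] EuclideanSpace ℝ (Fin d)))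
    (hsym : ∀ k, ∀ u w : EuclideanSpace ℝ (Fin d), ⟪H k u, w⟫ = ⟪u, H k w⟫)
    (hHm : ∀ k, ∀ u : EuclideanSpace ℝ (Fin d), m * ‖u‖ ^ 2 ≤ ⟪H k u, u⟫)
    (hHM : ∀ k, ∀ u : EuclideanSpace ℝ (Fin d), ‖H k u‖ ≤ M * ‖u‖)
    (zh₂ : ℕ → EuclideanSpace ℝ (Fin d))
    (hzh₂ : ∀ k, ∀ y, h₂ y ≥ h₂ (x k) + ⟪zh₂ k, y - x k⟫)
    (v : ℕ → EuclideanSpace ℝ (Fin d))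
    (hv : ∀ k, v k = gradient f₁ (x k) - gradient f₂ (x k) - zh₂ k)
    (Δx : ℕ → EuclideanSpace ℝ (Fin d))
    (hmin : ∀ k, ∀ dd : EuclideanSpace ℝ (Fin d),
      ⟪v k, Δx k⟫ + (1/2) * ⟪H k (Δx k), Δx k⟫ + h₁ (x k + Δx k)
        ≤ ⟪v k, dd⟫ + (1/2) * ⟪H k dd, dd⟫ + h₁ (x k + dd))
    (t : ℕ → ℝ) (ht : ∀ k, t k ∈ Set.Icc tlow 1)
    (hstep : ∀ k, x (k + 1) = x k + t k • Δx k)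
    (hdesc : ∀ k, F (x (k + 1)) - F (x k)
      ≤ α * t k * (⟪v k, Δx k⟫ + h₁ (x k + Δx k) - h₁ (x k))) :
    ∀ xstar : EuclideanSpace ℝ (Fin d),
      (∃ φ : ℕ → ℕ, StrictMono φ ∧ Tendsto (x ∘ φ) atTop (nhds xstar)) →
      ∃ z₁ z₂ : EuclideanSpace ℝ (Fin d),
        (∀ y, h₁ y ≥ h₁ xstar + ⟪z₁, y - xstar⟫) ∧
        (∀ y, h₂ y ≥ h₂ xstar + ⟪z₂, y - xstar⟫) ∧
        gradient f₁ xstar - gradient f₂ xstar + z₁ - z₂ = 0 := by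
  rintro xstar ⟨φ, hφ, hx⟩
  have hgrad (y) : ∇ (f₁ - f₂) y = ∇ f₁ y - ∇ f₂ y :=
    gradient_sub (hf₁.differentiable one_ne_zero y) (hf₂.differentiable one_ne_zero y)
  simp only [← hgrad] at hv ⊢
  exact stmt_11_general (hf₁.sub hf₂) hh₁ hh₁.locallyLipschitz.continuous
    hh₂.locallyLipschitz.continuous hF hm hHm hHM hzh₂ hv hmin (mul_pos hα.1 htlow.1)
    (fun k ↦ mul_le_mul_of_nonneg_left (ht k).1 hα.1.le) hdesc
    (.of_comp hφ.tendsto_atTop hx.mapClusterPt)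
end
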